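/- Let k ≥ 2 be an integer and δ ∈ (0,1), and let {(S_i,G_i)}_{i≥1} be a normal sequence of systems of configurations of degree k arising from invariant group homomorphisms on finite abelian groups. Then there exist n₀ and C > 0 (depending on δ, k and the sequence) such that for every i with |G_i| > n₀ and every integer t with C·(|G_i|/δ)·max over ℓ ∈ {2,…,k} of ((α_ℓ^k/α_1^k)·(1/k)·C(k,ℓ))^{1/(ℓ−1)} ≤ t ≤ δ|G_i|/2, the number of subsets X ⊆ G_i with |X| = t and X^k ∩ S_i^{(k)} = ∅ is at most t·(2e/δ²)^{δt}·C(⌊δ|G_i|⌋, t). -/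

import Mathlib

open Finset Filter Topology

attribute [local instance] Classical.propDecidable

/-- The set `S^{(k)}` of tuples of `S` with pairwise distinct entries. -/
noncomputable def distinctPart {k : ℕ} {G : Type} (S : Finset (Fin k → G)) :
    Finset (Fin k → G) :=
  S.filter fun x => Function.Injective x

/-- The restricted `ℓ`-th degree of freedom `α_ℓ^k(S,G)`. -/
noncomputable def alphaR {k : ℕ} {G : Type} [Fintype G] (S : Finset (Fin k → G)) (ℓ : ℕ) : ℕ :=
  (Finset.univ.filter fun U : Finset (Fin k) => U.card = ℓ).sup fun U =>
    Finset.univ.sup fun g : Fin k → G =>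
      ((distinctPart S).filter fun x => ∀ j ∈ U, x j = g j).card

/-- A sequence of configuration systems of degree `k` is normal with function `γ`. -/
def NormalSeq (k : ℕ) (G : ℕ → Type) [∀ i, Fintype (G i)]
    (S : ∀ i, Finset (Fin k → G i)) (γ : ℝ → ℝ) : Prop :=
  Tendsto (fun i => (Fintype.card (G i) : ℝ)) atTop atTop ∧
  Tendsto (fun i => (Fintype.card (G i) : ℝ) / ((S i).card : ℝ)) atTop (nhds 0) ∧
  Tendsto (fun i => (Fintype.card (G i) : ℝ) ^ k / ((S i).card : ℝ)) atTop atTop ∧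
  Tendsto (fun i => ((distinctPart (S i)).card : ℝ) / ((S i).card : ℝ)) atTop (nhds 1) ∧
  (∀ ε : ℝ, 0 < ε → ε < 1 → 0 < γ ε ∧ γ ε < 1) ∧
  (∀ ε : ℝ, 0 < ε → ε < 1 → ∀ i, ∀ X : Finset (G i),
    ε * (Fintype.card (G i) : ℝ) ≤ (X.card : ℝ) →
    γ ε * ((S i).card : ℝ) ≤ (((S i).filter (fun x => ∀ j, x j ∈ X)).card : ℝ))

/-!
The tuples of `S^{(k)}` are the edges of a `k`-uniform hypergraph on `G`, and the sets to be counted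
are its independent sets. Each independent set `I` lies in a container, a set of fewer than `δ|G|`
vertices that is determined by a small subset of `I`, the fingerprint of `I`; so one counts the
pairs consisting of a fingerprint `T` and a subset of size `t - |T|` of its container.

Containers are built by induction on the uniformity. A greedy algorithm runs through vertices of `I`
whose links are heavy and adds up these links, omitting the tuples that already contain a partial
tuple of nearly maximal degree. The tuples omitted carry little weight by Markov's inequality. The
result is a weight of uniformity one less, for which `I` is still independent. If the result is
large, the induction hypothesis applies to it; if it is small, then `I` has run out of heavy
vertices, and their complement is a container. In both cases a positive proportion of the vertices
is removed. As every set of `δ|G|` vertices contains a positive proportion of the edges, boundedly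
many repetitions lead to a container with fewer than `δ|G|` vertices.
-/

section Fingerprints

universe u

variable {V : Type u} {α β : Type*}

/-- The least element of a set, if there is one, in a fixed well-ordering of the type. -/
noncomputable def leastElement (s : Set V) : Option V :=
  if hs : s.Nonempty then some ((IsWellFounded.wf (r := WellOrderingRel)).min s hs) else none

lemma mem_of_mem_leastElement {s : Set V} {v : V} (hv : v ∈ leastElement s) : v ∈ s := by
  unfold leastElement at hv
  split_ifs at hv with hs
  · exact Option.mem_some_iff.1 hv ▸ WellFounded.min_mem _ s hs
  · exact absurd hv (Option.not_mem_none v)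

lemma leastElement_ne_none {s : Set V} (hs : s.Nonempty) : leastElement s ≠ none := by
  rw [leastElement, dif_pos hs]
  exact Option.some_ne_none _

lemma leastElement_eq_of_subset {s t : Set V} (hst : s ⊆ t) (hs : ∀ v ∈ leastElement t, v ∈ s) :
    leastElement s = leastElement t := by
  by_cases ht : t.Nonempty
  · have hmem : IsWellFounded.wf.min t ht ∈ s := hs _ (dif_pos ht)
    have hmin := WellFounded.min_eq_of_forall_not_lt (r := WellOrderingRel) IsWellFounded.wf hmem
      fun x hx => WellFounded.not_lt_min _ t (hst hx)
    rw [leastElement, leastElement, dif_pos ht, dif_pos ⟨_, hmem⟩, hmin]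
  · rw [leastElement, leastElement, dif_neg ht, dif_neg fun h => ht (h.mono hst)]

/-- A function of a finite vertex set `I` that comes with a certificate for its value: a subset of
`I`, the fingerprint, such that replacing `I` by any set between the fingerprint and `I` changes
neither the value nor the fingerprint. In particular the fingerprint determines the value. -/
structure FingerprintMap (V : Type u) (β : Type*) where
  toFun : Finset V → β
  fingerprint : Finset V → Finset V
  fingerprint_subset (I : Finset V) : fingerprint I ⊆ I
  stable {I J : Finset V} : fingerprint I ⊆ J → J ⊆ I →
    fingerprint J = fingerprint I ∧ toFun J = toFun I

namespace FingerprintMap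

instance : CoeFun (FingerprintMap V β) fun _ => Finset V → β := ⟨toFun⟩

/-- The constant function, with empty fingerprint. -/
protected def pure (b : β) : FingerprintMap V β where
  toFun _ := b
  fingerprint _ := ∅
  fingerprint_subset := empty_subset
  stable _ _ := ⟨rfl, rfl⟩

/-- Post-processing of the value, at no cost in fingerprint. -/
protected def map (g : α → β) (F : FingerprintMap V α) : FingerprintMap V β where
  toFun I := g (F I)
  fingerprint := F.fingerprint
  fingerprint_subset := F.fingerprint_subset
  stable hIJ hJI := (F.stable hIJ hJI).imp_right (congrArg g)

/-- Sequential composition: the second function may depend on the value of the first one, and the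
fingerprints are united. -/
protected noncomputable def bind (F : FingerprintMap V α) (g : α → FingerprintMap V β) :
    FingerprintMap V β where
  toFun I := g (F I) I
  fingerprint I := F.fingerprint I ∪ (g (F I)).fingerprint I
  fingerprint_subset I := union_subset (F.fingerprint_subset I) ((g (F I)).fingerprint_subset I)
  stable {I J} hIJ hJI := by
    obtain ⟨hfp, hval⟩ := F.stable (union_subset_left hIJ) hJI
    obtain ⟨hfp', hval'⟩ := (g (F I)).stable (union_subset_right hIJ) hJI
    simp only [hfp, hval, hfp', hval', and_self]

lemma card_fingerprint_bind_le {F : FingerprintMap V α} {g : α → FingerprintMap V β}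
    {I : Finset V} {a b : ℕ} (hF : #(F.fingerprint I) ≤ a)
    (hg : #((g (F I)).fingerprint I) ≤ b) : #((F.bind g).fingerprint I) ≤ a + b :=
  (card_union_le _ _).trans (add_le_add hF hg)

/-- Iteration of a step that transforms a state. -/
noncomputable def iterate (F : α → FingerprintMap V α) : ℕ → α → FingerprintMap V α
  | 0, a => .pure a
  | n + 1, a => (iterate F n a).bind F

lemma card_fingerprint_iterate_le {F : α → FingerprintMap V α} {b : ℕ}
    (hF : ∀ a I, #((F a).fingerprint I) ≤ b) (n : ℕ) (a : α) (I : Finset V) :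
    #((iterate F n a).fingerprint I) ≤ n * b := by
  induction n with
  | zero => exact card_empty.le.trans (Nat.zero_le _)
  | succ n ih => exact (card_fingerprint_bind_le ih (hF _ I)).trans_eq (Nat.succ_mul n b).symm

lemma iterate_induction {F : α → FingerprintMap V α} {I : Finset V} {P : ℕ → α → Prop} {a : α}
    (zero : P 0 a) (step : ∀ j a, P j a → P (j + 1) (F a I)) : ∀ n, P n (iterate F n a I)
  | 0 => zero
  | n + 1 => step n _ (iterate_induction zero step n)

/-- The least element of `I ∩ s`, if there is one; it is its own fingerprint. -/
noncomputable def leastIn (s : Finset V) : FingerprintMap V (Option V) where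
  toFun I := leastElement {v | v ∈ I ∧ v ∈ s}
  fingerprint I := (leastElement {v | v ∈ I ∧ v ∈ s}).toFinset
  fingerprint_subset _ _ hv := (mem_of_mem_leastElement (Option.mem_toFinset.1 hv)).1
  stable {I J} hIJ hJI := by
    have heq : leastElement {v | v ∈ J ∧ v ∈ s} = leastElement {v | v ∈ I ∧ v ∈ s} :=
      leastElement_eq_of_subset (fun _ hv => ⟨hJI hv.1, hv.2⟩) fun _ hv =>
        ⟨hIJ (Option.mem_toFinset.2 hv), (mem_of_mem_leastElement hv).2⟩
    exact ⟨congrArg Option.toFinset heq, heq⟩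

lemma card_fingerprint_leastIn_le (s I : Finset V) : #((leastIn s).fingerprint I) ≤ 1 :=
  card_le_one.2 fun _ hv _ hw =>
    Option.mem_unique (Option.mem_toFinset.1 hv) (Option.mem_toFinset.1 hw)

lemma leastIn_cases (s I : Finset V) :
    (Disjoint I s ∧ leastIn s I = none) ∨ ∃ v ∈ I, v ∈ s ∧ leastIn s I = some v := by
  obtain hnone | ⟨v, hv⟩ := (leastIn s I).eq_none_or_eq_some
  · refine .inl ⟨disjoint_left.2 fun v hI hs => ?_, hnone⟩
    exact leastElement_ne_none (s := {v | v ∈ I ∧ v ∈ s}) ⟨v, hI, hs⟩ hnone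
  · obtain ⟨hI, hs⟩ := mem_of_mem_leastElement hv
    exact .inr ⟨v, hI, hs, hv⟩

/-- One step of a search for a small container: a set of fewer than `d` vertices is kept, a larger
one is cut down by `F`. -/
noncomputable def shrink (d : ℝ) (F : Finset V → FingerprintMap V (Finset V)) (X : Finset V) :
    FingerprintMap V (Finset V) :=
  if (#X : ℝ) < d then .pure X else (F X).map (X ∩ ·)

lemma card_fingerprint_shrink_le {d : ℝ} {F : Finset V → FingerprintMap V (Finset V)} {b : ℕ}
    (hF : ∀ X I, #((F X).fingerprint I) ≤ b) (X I : Finset V) :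
    #((shrink d F X).fingerprint I) ≤ b := by
  unfold shrink
  split_ifs
  · exact card_empty.le.trans (Nat.zero_le b)
  · exact hF X I

lemma subset_iterate_shrink_and_card_lt {d r : ℝ} {F : Finset V → FingerprintMap V (Finset V)}
    {I X : Finset V} (hF : ∀ Y, d ≤ #Y → I ⊆ F Y I ∧ r ≤ #(Y \ F Y I)) (hIX : I ⊆ X) (hd : 0 < d)
    {m : ℕ} (hm : #X ≤ m * r) :
    I ⊆ iterate (shrink d F) m X I ∧ (#(iterate (shrink d F) m X I) : ℝ) < d := by
  have hcard := iterate_induction (F := shrink d F) (I := I) (a := X)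
    (P := fun j Y => I ⊆ Y ∧ ((#Y : ℝ) < d ∨ #Y + j * r ≤ #X)) ⟨hIX, .inr (by simp)⟩ ?_ m
  · exact ⟨hcard.1, hcard.2.elim id fun h => by linarith⟩
  rintro j Y ⟨hIY, hcard⟩
  by_cases hY : (#Y : ℝ) < d
  · have hpure : shrink d F Y I = Y := by simp only [shrink, hY, if_true]; rfl
    rw [hpure]
    exact ⟨hIY, .inl hY⟩
  · obtain ⟨hIF, hr⟩ := hF Y (not_lt.1 hY)
    have hcut : shrink d F Y I = Y ∩ F Y I := by simp only [shrink, hY, if_false]; rfl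
    have hsplit : (#(Y \ F Y I) + #(Y ∩ F Y I) : ℝ) = #Y :=
      mod_cast card_sdiff_add_card_inter Y (F Y I)
    rw [hcut]
    refine ⟨subset_inter hIY hIF, .inr ?_⟩
    push_cast
    linarith [hcard.resolve_left hY]

lemma toFun_fingerprint (F : FingerprintMap V β) (I : Finset V) : F (F.fingerprint I) = F I :=
  (F.stable Subset.rfl (F.fingerprint_subset I)).2

lemma card_filter_fingerprint_eq_le (F : FingerprintMap V (Finset V)) {N : ℕ} {P : Finset V → Prop}
    (hF : ∀ I, P I → I ⊆ F I ∧ #(F I) ≤ N) {𝒜 : Finset (Finset V)} {t : ℕ}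
    (h𝒜 : ∀ I ∈ 𝒜, #I = t ∧ P I) (T : Finset V) :
    #{I ∈ 𝒜 | F.fingerprint I = T} ≤ N.choose (t - #T) := by
  obtain hempty | ⟨I₀, hI₀⟩ := {I ∈ 𝒜 | F.fingerprint I = T}.eq_empty_or_nonempty
  · simp [hempty]
  have hcontainer : ∀ I ∈ ({I ∈ 𝒜 | F.fingerprint I = T} : Finset _), F I = F T := by
    intro I hI
    rw [← (mem_filter.1 hI).2, toFun_fingerprint]
  have hT : ∀ I ∈ ({I ∈ 𝒜 | F.fingerprint I = T} : Finset _), T ⊆ I := by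
    intro I hI
    exact (mem_filter.1 hI).2 ▸ F.fingerprint_subset I
  have hmaps : ∀ I ∈ ({I ∈ 𝒜 | F.fingerprint I = T} : Finset _),
      I \ T ∈ powersetCard (t - #T) (F T) := by
    intro I hI
    obtain ⟨hcard, hP⟩ := h𝒜 I (mem_filter.1 hI).1
    exact mem_powersetCard.2 ⟨sdiff_subset.trans (hcontainer I hI ▸ (hF I hP).1),
      by rw [card_sdiff_of_subset (hT I hI), hcard]⟩
  have hinj : Set.InjOn (· \ T) ({I ∈ 𝒜 | F.fingerprint I = T} : Finset _) := by
    intro I hI J hJ hIJ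
    rw [← union_sdiff_of_subset (hT I hI), ← union_sdiff_of_subset (hT J hJ)]
    exact congrArg (T ∪ ·) hIJ
  calc #{I ∈ 𝒜 | F.fingerprint I = T}
      ≤ #(powersetCard (t - #T) (F T)) := card_le_card_of_injOn _ hmaps hinj
    _ ≤ N.choose (t - #T) := by
        rw [card_powersetCard, ← hcontainer I₀ hI₀]
        exact Nat.choose_le_choose _ (hF I₀ (h𝒜 I₀ (mem_filter.1 hI₀).1).2).2

theorem card_le_sum_choose_mul_choose [Fintype V] (F : FingerprintMap V (Finset V)) {b N t : ℕ}
    {P : Finset V → Prop} [DecidablePred P] (hb : ∀ I, #(F.fingerprint I) ≤ b)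
    (hF : ∀ I, P I → I ⊆ F I ∧ #(F I) ≤ N) :
    #{I : Finset V | #I = t ∧ P I} ≤
      ∑ j ∈ range (b + 1), (Fintype.card V).choose j * N.choose (t - j) := by
  rw [card_eq_sum_card_fiberwise (f := fun I => #(F.fingerprint I)) (t := range (b + 1))
    fun I _ => mem_coe.2 (mem_range_succ_iff.2 (hb I))]
  refine sum_le_sum fun j _ => ?_
  rw [mul_comm, ← card_univ, ← card_powersetCard j univ]
  refine card_le_mul_card_image_of_maps_to (f := F.fingerprint)
    (fun I hI => mem_powersetCard.2 ⟨subset_univ _, (mem_filter.1 hI).2⟩) _ fun T hT => ?_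
  rw [← (mem_powersetCard.1 hT).2]
  exact F.card_filter_fingerprint_eq_le hF
    (fun I hI => (mem_filter.1 (mem_filter.1 hI).1).2) T

end FingerprintMap

end Fingerprints

section Codegree

variable {ι V : Type*} [Fintype ι] [DecidableEq ι] [Fintype V]

/-- The total weight of the tuples that agree with `g` on the coordinates in `U`: the degree of the
partial tuple `g|_U` in the weighted hypergraph `A`. -/
noncomputable def codegree (A : (ι → V) → ℝ) (U : Finset ι) (g : ι → V) : ℝ :=
  ∑ x with ∀ j ∈ U, x j = g j, A x

variable {A B : (ι → V) → ℝ} {U : Finset ι} {g h : ι → V}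

lemma codegree_empty (A : (ι → V) → ℝ) (g : ι → V) : codegree A ∅ g = ∑ x, A x := by
  simp [codegree]

lemma codegree_nonneg (hA : 0 ≤ A) (U : Finset ι) (g : ι → V) : 0 ≤ codegree A U g :=
  sum_nonneg fun x _ => hA x

lemma codegree_mono (hAB : A ≤ B) (U : Finset ι) (g : ι → V) : codegree A U g ≤ codegree B U g :=
  sum_le_sum fun x _ => hAB x

lemma codegree_congr (A : (ι → V) → ℝ) (hgh : ∀ j ∈ U, g j = h j) :
    codegree A U g = codegree A U h :=
  sum_congr (filter_congr fun _ _ => forall₂_congr fun j hj => by rw [hgh j hj]) fun _ _ => rfl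

lemma codegree_eq_zero (hA : ∀ x, (∀ j ∈ U, x j = g j) → A x = 0) : codegree A U g = 0 :=
  sum_eq_zero fun x hx => hA x (mem_filter.1 hx).2

lemma codegree_add_smul (A B : (ι → V) → ℝ) (a : ℝ) (U : Finset ι) (g : ι → V) :
    codegree (A + a • B) U g = codegree A U g + a * codegree B U g := by
  simp only [codegree, Pi.add_apply, Pi.smul_apply, smul_eq_mul, sum_add_distrib, mul_sum]

lemma sum_codegree_mul_comm (A B : (ι → V) → ℝ) (U : Finset ι) :
    ∑ y, codegree A U y * B y = ∑ x, A x * codegree B U x := by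
  simp only [codegree, sum_filter, sum_mul, mul_sum]
  rw [sum_comm]
  refine sum_congr rfl fun x _ => sum_congr rfl fun y _ => ?_
  simp only [eq_comm (a := x _)]
  split_ifs <;> ring

variable {s : ℕ}

lemma sum_fin_cons (f : (Fin (s + 1) → V) → ℝ) : ∑ x, f x = ∑ v, ∑ y, f (Fin.cons v y) := by
  rw [← Fintype.sum_prod_type']
  exact (Fintype.sum_equiv (Fin.consEquiv fun _ => V) _ _ fun _ => rfl).symm

lemma codegree_cons (A : (Fin (s + 1) → V) → ℝ) (U : Finset (Fin s)) (v : V) (g : Fin s → V) :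
    codegree (fun y => A (Fin.cons v y)) U g =
      codegree A (insert 0 (U.map (Fin.succEmb s))) (Fin.cons v g) := by
  simp only [codegree, sum_filter]
  rw [sum_fin_cons, sum_eq_single v (fun w _ hw => by simp [hw]) (by simp)]
  refine sum_congr rfl fun y _ => ?_
  congr 1
  simp

lemma codegree_sum_cons (A : (Fin (s + 1) → V) → ℝ) (U : Finset (Fin s)) (v : V) (g : Fin s → V) :
    codegree (fun y => ∑ w, A (Fin.cons w y)) U g =
      codegree A (U.map (Fin.succEmb s)) (Fin.cons v g) := by
  simp only [codegree, sum_filter]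
  rw [sum_fin_cons, sum_comm]
  refine sum_congr rfl fun y _ => ?_
  split_ifs with hy <;> simp +contextual [hy]

end Codegree

section BoundedWeight

variable {ι V : Type*} [Fintype ι] [DecidableEq ι] [Fintype V]
variable {K L p : ℝ} {W : Finset V} {s : ℕ}

/-- A nonnegative weight on tuples with entries in `W`, in which fixing `u ≥ 1` entries leaves a
total weight of at most `K p ^ (u - 1)`. For the weight `1 / Δ` on the edges of a hypergraph, this
is the codegree condition `Δ_u ≤ K p ^ (u - 1) Δ` of the container method. -/
structure IsBoundedWeight (K p : ℝ) (W : Finset V) (A : (ι → V) → ℝ) : Prop where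
  nonneg : 0 ≤ A
  mem_of_ne_zero {x : ι → V} : A x ≠ 0 → ∀ j, x j ∈ W
  codegree_le {U : Finset ι} : U.Nonempty → ∀ g : ι → V, codegree A U g ≤ K * p ^ (#U - 1)

/-- No tuple of nonzero weight has all its entries in `I`. -/
def IsIndependent (A : (ι → V) → ℝ) (I : Finset V) : Prop :=
  ∀ x, (∀ j, x j ∈ I) → A x = 0

/-- The tuple `y` contains a partial tuple whose degree in `h` is more than half of the maximum
`L p ^ (u - 1)` allowed in a bounded weight. -/
def IsSaturated (L p : ℝ) (h : (ι → V) → ℝ) (y : ι → V) : Prop :=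
  ∃ U : Finset ι, U.Nonempty ∧ L / 2 * p ^ (#U - 1) < codegree h U y

/-- The link of the vertex `v` in `A`, without the tuples that `h` saturates. -/
noncomputable def trimmedLink (L p : ℝ) (A : (Fin (s + 1) → V) → ℝ) (h : (Fin s → V) → ℝ) (v : V)
    (y : Fin s → V) : ℝ :=
  if IsSaturated L p h y then 0 else A (Fin.cons v y)

lemma isBoundedWeight_zero (hL : 0 ≤ L) (hp : 0 ≤ p) (W : Finset V) :
    IsBoundedWeight L p W (0 : (ι → V) → ℝ) where
  nonneg := le_rfl
  mem_of_ne_zero hx := absurd rfl hx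
  codegree_le _ g := by
    simpa only [codegree, Pi.zero_apply, sum_const_zero] using mul_nonneg hL (pow_nonneg hp _)

lemma IsSaturated.one_le_sum {h : (ι → V) → ℝ} {y : ι → V} (hy : IsSaturated L p h y) (hh : 0 ≤ h)
    (hL : 0 < L) (hp : 0 < p) :
    1 ≤ ∑ U : Finset ι with U.Nonempty, (L / 2 * p ^ (#U - 1))⁻¹ * codegree h U y := by
  obtain ⟨U, hU, hlt⟩ := hy
  calc 1 ≤ (L / 2 * p ^ (#U - 1))⁻¹ * codegree h U y := by
        rw [inv_mul_eq_div, one_le_div (by positivity)]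
        exact hlt.le
    _ ≤ ∑ U : Finset ι with U.Nonempty, (L / 2 * p ^ (#U - 1))⁻¹ * codegree h U y :=
        single_le_sum (f := fun U => (L / 2 * p ^ (#U - 1))⁻¹ * codegree h U y)
          (fun U _ => mul_nonneg (by positivity) (codegree_nonneg hh U y))
          ((mem_filter_univ U).2 hU)

lemma codegree_trimmedLink_eq_zero {A : (Fin (s + 1) → V) → ℝ} {h : (Fin s → V) → ℝ} {v : V}
    {U : Finset (Fin s)} (hU : U.Nonempty) {g : Fin s → V}
    (hg : L / 2 * p ^ (#U - 1) < codegree h U g) :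
    codegree (trimmedLink L p A h v) U g = 0 :=
  codegree_eq_zero fun _ hy =>
    if_pos ⟨U, hU, hg.trans_eq (codegree_congr h fun j hj => (hy j hj).symm)⟩

namespace IsBoundedWeight

lemma sum_codegree_mul_le {B h : (ι → V) → ℝ} (hB : IsBoundedWeight K p W B) (hh : 0 ≤ h)
    {U : Finset ι} (hU : U.Nonempty) :
    ∑ y, codegree h U y * B y ≤ K * p ^ (#U - 1) * ∑ x, h x := by
  rw [sum_codegree_mul_comm, mul_comm, sum_mul]
  exact sum_le_sum fun x _ => mul_le_mul_of_nonneg_left (hB.codegree_le hU x) (hh x)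

/-- Markov's inequality, summed over the `2 ^ |ι|` reasons for a tuple to be saturated. -/
lemma sum_isSaturated_le {B h : (ι → V) → ℝ} (hB : IsBoundedWeight K p W B) (hh : 0 ≤ h)
    (hK : 0 ≤ K) (hL : 0 < L) (hp : 0 < p) :
    ∑ y with IsSaturated L p h y, B y ≤ 2 ^ Fintype.card ι * (2 * K / L) * ∑ x, h x := by
  set 𝒰 : Finset (Finset ι) := {U | U.Nonempty}
  have hcard : (#𝒰 : ℝ) ≤ 2 ^ Fintype.card ι := by
    exact_mod_cast (card_filter_le _ _).trans_eq (by rw [card_univ, Fintype.card_finset])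
  have hratio (y : ι → V) : 0 ≤ ∑ U ∈ 𝒰, (L / 2 * p ^ (#U - 1))⁻¹ * codegree h U y :=
    sum_nonneg fun U _ => mul_nonneg (by positivity) (codegree_nonneg hh U y)
  calc ∑ y with IsSaturated L p h y, B y
      ≤ ∑ y with IsSaturated L p h y,
          (∑ U ∈ 𝒰, (L / 2 * p ^ (#U - 1))⁻¹ * codegree h U y) * B y :=
        sum_le_sum fun y hy => le_mul_of_one_le_left (hB.nonneg y)
          ((mem_filter.1 hy).2.one_le_sum hh hL hp)
    _ ≤ ∑ y, (∑ U ∈ 𝒰, (L / 2 * p ^ (#U - 1))⁻¹ * codegree h U y) * B y :=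
        sum_le_sum_of_subset_of_nonneg (filter_subset _ _)
          fun y _ _ => mul_nonneg (hratio y) (hB.nonneg y)
    _ = ∑ U ∈ 𝒰, (L / 2 * p ^ (#U - 1))⁻¹ * ∑ y, codegree h U y * B y := by
        simp only [sum_mul, mul_sum, mul_assoc]
        exact sum_comm
    _ ≤ ∑ U ∈ 𝒰, 2 * K / L * ∑ x, h x := by
        refine sum_le_sum fun U hU => ?_
        refine (mul_le_mul_of_nonneg_left (hB.sum_codegree_mul_le hh (mem_filter.1 hU).2)
          (by positivity)).trans_eq ?_
        field_simp
    _ ≤ 2 ^ Fintype.card ι * (2 * K / L) * ∑ x, h x := by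
        rw [sum_const, nsmul_eq_mul, mul_assoc]
        exact mul_le_mul_of_nonneg_right hcard
          (mul_nonneg (by positivity) (sum_nonneg fun x _ => hh x))

lemma marginal {A : (Fin (s + 1) → V) → ℝ} (hA : IsBoundedWeight K p W A) :
    IsBoundedWeight K p W fun y : Fin s → V => ∑ v, A (Fin.cons v y) where
  nonneg y := sum_nonneg fun v _ => hA.nonneg _
  mem_of_ne_zero {y} hy j := by
    obtain ⟨v, -, hv⟩ := exists_ne_zero_of_sum_ne_zero hy
    simpa only [Fin.cons_succ] using hA.mem_of_ne_zero hv j.succ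
  codegree_le {U} hU g := by
    obtain ⟨j, -⟩ := id hU
    rw [codegree_sum_cons A U (g j) g, ← card_map (Fin.succEmb s)]
    exact hA.codegree_le hU.map _

variable {A : (Fin (s + 1) → V) → ℝ} {h : (Fin s → V) → ℝ}

lemma trimmedLink_nonneg (hA : IsBoundedWeight K p W A) (v : V) : 0 ≤ trimmedLink L p A h v := by
  intro y
  simp only [trimmedLink]
  split_ifs
  exacts [le_rfl, hA.nonneg _]

lemma trimmedLink_le (hA : IsBoundedWeight K p W A) (v : V) (y : Fin s → V) :
    trimmedLink L p A h v y ≤ A (Fin.cons v y) := by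
  simp only [trimmedLink]
  split_ifs
  exacts [hA.nonneg _, le_rfl]

lemma codegree_trimmedLink_le (hA : IsBoundedWeight K p W A) (v : V) (U : Finset (Fin s))
    (g : Fin s → V) : codegree (trimmedLink L p A h v) U g ≤ K * p ^ #U := by
  have hcard : #(insert 0 (U.map (Fin.succEmb s))) - 1 = #U := by
    rw [card_insert_of_notMem (by simp), card_map, Nat.add_sub_cancel]
  calc codegree (trimmedLink L p A h v) U g
      ≤ codegree (fun y => A (Fin.cons v y)) U g := codegree_mono (hA.trimmedLink_le v) U g
    _ ≤ K * p ^ #U := by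
        rw [codegree_cons, ← hcard]
        exact hA.codegree_le (insert_nonempty _ _) _

lemma sum_trimmedLink_le (hA : IsBoundedWeight K p W A) (v : V) :
    ∑ y, trimmedLink L p A h v y ≤ K := by
  simpa only [codegree_empty, card_empty, pow_zero, mul_one] using
    hA.codegree_trimmedLink_le (L := L) (h := h) v ∅ fun _ => v

lemma add_trimmedLink (hA : IsBoundedWeight K p W A) (hh : IsBoundedWeight L p W h) (hp : 0 < p)
    (hKL : 2 * K ≤ L) (v : V) :
    IsBoundedWeight L p W (h + p⁻¹ • trimmedLink L p A h v) where
  nonneg := add_nonneg hh.nonneg (smul_nonneg (inv_nonneg.2 hp.le) (hA.trimmedLink_nonneg v))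
  mem_of_ne_zero {y} hy j := by
    by_cases hhy : h y = 0
    · have hne : A (Fin.cons v y) ≠ 0 := fun h0 => hy (by simp [hhy, trimmedLink, h0])
      simpa only [Fin.cons_succ] using hA.mem_of_ne_zero hne j.succ
    · exact hh.mem_of_ne_zero hhy j
  codegree_le {U} hU g := by
    rw [codegree_add_smul]
    obtain hg | hg := lt_or_ge (L / 2 * p ^ (#U - 1)) (codegree h U g)
    · rw [codegree_trimmedLink_eq_zero hU hg, mul_zero, add_zero]
      exact hh.codegree_le hU g
    · have hlink : p⁻¹ * codegree (trimmedLink L p A h v) U g ≤ K * p ^ (#U - 1) := by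
        rw [inv_mul_le_iff₀ hp, mul_left_comm, mul_pow_sub_one hU.card_ne_zero]
        exact hA.codegree_trimmedLink_le v U g
      nlinarith [pow_pos hp (#U - 1)]

end IsBoundedWeight

end BoundedWeight

section Container

open FingerprintMap

variable {V : Type*} [Fintype V] {s : ℕ} {c K L p : ℝ} {b : ℕ} {W I : Finset V}

/-- The vertices whose trimmed link has total weight at least `c / 4`. -/
noncomputable def heavyVertices (c L p : ℝ) (A : (Fin (s + 1) → V) → ℝ) (h : (Fin s → V) → ℝ) :
    Finset V :=
  {v | c / 4 ≤ ∑ y, trimmedLink L p A h v y}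

/-- One step of the greedy algorithm: add to `h` the trimmed link of the least heavy vertex of the
argument, if there is one. -/
noncomputable def addHeavyLink (c L p : ℝ) (A : (Fin (s + 1) → V) → ℝ) (h : (Fin s → V) → ℝ) :
    FingerprintMap V ((Fin s → V) → ℝ) :=
  (leastIn (heavyVertices c L p A h)).map fun o =>
    o.elim h fun v => h + p⁻¹ • trimmedLink L p A h v

variable {A : (Fin (s + 1) → V) → ℝ} {h : (Fin s → V) → ℝ}

lemma addHeavyLink_cases (c L p : ℝ) (A : (Fin (s + 1) → V) → ℝ) (h : (Fin s → V) → ℝ)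
    (I : Finset V) :
    (Disjoint I (heavyVertices c L p A h) ∧ addHeavyLink c L p A h I = h) ∨
      ∃ v ∈ I, v ∈ heavyVertices c L p A h ∧
        addHeavyLink c L p A h I = h + p⁻¹ • trimmedLink L p A h v := by
  refine (leastIn_cases (heavyVertices c L p A h) I).imp ?_ ?_
  · rintro ⟨hI, hnone⟩
    exact ⟨hI, congrArg (fun o => o.elim h fun v => h + p⁻¹ • trimmedLink L p A h v) hnone⟩
  · rintro ⟨v, hvI, hv, hsome⟩
    exact ⟨v, hvI, hv, congrArg (fun o => o.elim h fun v => h + p⁻¹ • trimmedLink L p A h v) hsome⟩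

lemma sum_add_smul_trimmedLink (h : (Fin s → V) → ℝ) (v : V) :
    ∑ y, (h + p⁻¹ • trimmedLink L p A h v) y =
      ∑ y, h y + p⁻¹ * ∑ y, trimmedLink L p A h v y := by
  simp only [Pi.add_apply, Pi.smul_apply, smul_eq_mul, sum_add_distrib, mul_sum]

lemma IsBoundedWeight.heavyVertices_subset (hA : IsBoundedWeight K p W A) (hc : 0 < c) :
    heavyVertices c L p A h ⊆ W := by
  intro v hv
  have hsum : ∑ y, trimmedLink L p A h v y ≠ 0 :=
    ((div_pos hc four_pos).trans_le (mem_filter.1 hv).2).ne'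
  obtain ⟨y, -, hy⟩ := exists_ne_zero_of_sum_ne_zero hsum
  have hcons : A (Fin.cons v y) ≠ 0 := fun h0 => hy (by simp only [trimmedLink, h0, ite_self])
  simpa only [Fin.cons_zero] using hA.mem_of_ne_zero hcons 0

/-- The result of `b` greedy steps, a weight of uniformity one less. -/
noncomputable def greedyLink (c L p : ℝ) (b : ℕ) (A : (Fin (s + 1) → V) → ℝ) :
    FingerprintMap V ((Fin s → V) → ℝ) :=
  iterate (addHeavyLink c L p A) b 0

lemma card_fingerprint_greedyLink_le : #((greedyLink c L p b A).fingerprint I) ≤ b :=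
  (card_fingerprint_iterate_le (F := addHeavyLink c L p A)
    (fun _ _ => card_fingerprint_leastIn_le _ _) b 0 I).trans_eq (mul_one b)

lemma IsIndependent.greedyLink_apply (hI : IsIndependent A I) :
    IsIndependent (greedyLink c L p b A I) I := by
  refine iterate_induction (P := fun _ h => IsIndependent h I) (fun _ _ => rfl) ?_ b
  intro _ h hh
  obtain ⟨-, heq⟩ | ⟨v, hvI, -, heq⟩ := addHeavyLink_cases c L p A h I <;> rw [heq]
  · exact hh
  · intro y hy
    simp [hh y hy, trimmedLink, hI (Fin.cons v y) (Fin.forall_iff_succ.2 ⟨hvI, hy⟩)]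

lemma IsBoundedWeight.greedyLink_apply (hA : IsBoundedWeight K p W A) (hK : 0 ≤ K) (hKL : 2 * K ≤ L)
    (hp : 0 < p) : IsBoundedWeight L p W (greedyLink c L p b A I) := by
  refine iterate_induction (P := fun _ h => IsBoundedWeight L p W h)
    (isBoundedWeight_zero (by linarith) hp.le W) ?_ b
  intro _ h hh
  obtain ⟨-, heq⟩ | ⟨v, -, -, heq⟩ := addHeavyLink_cases c L p A h I <;> rw [heq]
  · exact hh
  · exact hA.add_trimmedLink hh hp hKL v

lemma IsBoundedWeight.sum_greedyLink_le (hA : IsBoundedWeight K p W A) (hK : 0 ≤ K) (hp : 0 < p) :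
    ∑ y, greedyLink c L p b A I y ≤ b * (p⁻¹ * K) := by
  refine iterate_induction
    (P := fun j (h : (Fin s → V) → ℝ) => ∑ y, h y ≤ j * (p⁻¹ * K)) ?_ ?_ b
  · simp only [Pi.zero_apply, sum_const_zero, Nat.cast_zero, zero_mul, le_refl]
  intro j h hh
  push_cast
  obtain ⟨-, heq⟩ | ⟨v, -, -, heq⟩ := addHeavyLink_cases c L p A h I <;> rw [heq]
  · linarith [mul_nonneg (inv_nonneg.2 hp.le) hK]
  · rw [sum_add_smul_trimmedLink]
    linarith [mul_le_mul_of_nonneg_left (hA.sum_trimmedLink_le (L := L) (h := h) v)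
      (inv_nonneg.2 hp.le)]

lemma le_sum_greedyLink_or_disjoint (hp : 0 < p) :
    b * (p⁻¹ * (c / 4)) ≤ ∑ y, greedyLink c L p b A I y ∨
      Disjoint I (heavyVertices c L p A (greedyLink c L p b A I)) := by
  refine iterate_induction (P := fun j h => j * (p⁻¹ * (c / 4)) ≤ ∑ y, h y ∨
    Disjoint I (heavyVertices c L p A h)) ?_ ?_ b
  · simp only [Pi.zero_apply, sum_const_zero, Nat.cast_zero, zero_mul, le_refl, true_or]
  intro j h hh
  push_cast
  obtain ⟨hI, heq⟩ | ⟨v, hvI, hv, heq⟩ := addHeavyLink_cases c L p A h I <;> rw [heq]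
  · exact .inr hI
  · have hsum := hh.resolve_right fun hI => disjoint_left.1 hI hvI hv
    rw [sum_add_smul_trimmedLink]
    left
    linarith [mul_le_mul_of_nonneg_left (mem_filter.1 hv).2 (inv_nonneg.2 hp.le)]

/-- A bound for the weights produced by the greedy algorithm that is large enough for the tuples
they saturate to carry little weight. -/
noncomputable def trimBound (s : ℕ) (c K : ℝ) : ℝ :=
  max (2 * K) (2 ^ (s + 4) * K ^ 2 / c)

lemma trimBound_pos (s : ℕ) (c : ℝ) (hK : 0 < K) : 0 < trimBound s c K :=
  (mul_pos two_pos hK).trans_le (le_max_left _ _)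

lemma IsBoundedWeight.sum_isSaturated_marginal_le (hA : IsBoundedWeight K p W A) (hh : 0 ≤ h)
    (hc : 0 < c) (hK : 0 < K) (hp : 0 < p) {n : ℝ} (hsum : ∑ y, h y ≤ 2 * K * n) :
    ∑ y with IsSaturated (trimBound s c K) p h y, ∑ v, A (Fin.cons v y) ≤ c / 4 * n := by
  set L := trimBound s c K
  have hL : 0 < L := trimBound_pos s c hK
  have hKL : 2 ^ (s + 4) * K ^ 2 ≤ L * c := (div_le_iff₀ hc).1 (le_max_right _ _)
  have hn : 0 ≤ n := nonneg_of_mul_nonneg_right ((sum_nonneg fun y _ => hh y).trans hsum)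
    (mul_pos two_pos hK)
  calc ∑ y with IsSaturated L p h y, ∑ v, A (Fin.cons v y)
      ≤ 2 ^ s * (2 * K / L) * ∑ y, h y := by
        simpa only [Fintype.card_fin] using hA.marginal.sum_isSaturated_le hh hK.le hL hp
    _ ≤ 2 ^ s * (2 * K / L) * (2 * K * n) := mul_le_mul_of_nonneg_left hsum (by positivity)
    _ = 2 ^ (s + 4) * K ^ 2 / L * (n / 4) := by ring
    _ ≤ c * (n / 4) := by
        gcongr
        rwa [div_le_iff₀' hL]
    _ = c / 4 * n := by ring

lemma IsBoundedWeight.le_card_heavyVertices (hA : IsBoundedWeight K p W A) (hh : 0 ≤ h)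
    (hc : 0 < c) (hK : 0 < K) (hp : 0 < p) (hAc : c * Fintype.card V ≤ ∑ x, A x)
    (hsum : ∑ y, h y ≤ 2 * K * Fintype.card V) :
    c / (2 * K) * Fintype.card V ≤ #(heavyVertices c (trimBound s c K) p A h) := by
  set L := trimBound s c K
  set n : ℝ := (Fintype.card V : ℝ)
  have hswap : ∑ y with IsSaturated L p h y, ∑ v, A (Fin.cons v y) =
      ∑ v, ∑ y with IsSaturated L p h y, A (Fin.cons v y) := sum_comm
  have hsplit : ∑ x, A x = ∑ v, ∑ y, trimmedLink L p A h v y +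
      ∑ y with IsSaturated L p h y, ∑ v, A (Fin.cons v y) := by
    rw [hswap, sum_fin_cons, ← sum_add_distrib]
    refine sum_congr rfl fun v _ => ?_
    rw [sum_filter, ← sum_add_distrib]
    refine sum_congr rfl fun y _ => ?_
    simp only [trimmedLink]
    split_ifs <;> simp
  have hvertex (v : V) : ∑ y, trimmedLink L p A h v y ≤
      (if v ∈ heavyVertices c L p A h then K else 0) + c / 4 := by
    split_ifs with hv
    · linarith [hA.sum_trimmedLink_le (L := L) (h := h) v]
    · linarith [not_le.1 fun hle => hv (mem_filter.2 ⟨mem_univ v, hle⟩)]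
  have hlinks : ∑ v, ∑ y, trimmedLink L p A h v y ≤
      #(heavyVertices c L p A h) * K + n * (c / 4) := by
    refine (sum_le_sum fun v _ => hvertex v).trans_eq ?_
    rw [sum_add_distrib, sum_ite_mem, univ_inter, sum_const, sum_const, nsmul_eq_mul, nsmul_eq_mul,
      card_univ]
  have hsat := hA.sum_isSaturated_marginal_le hh hc hK hp hsum
  rw [div_mul_eq_mul_div, div_le_iff₀ (by positivity)]
  linarith

lemma IsBoundedWeight.disjoint_and_le_card_heavyVertices (hA : IsBoundedWeight K p W A)
    (hc : 0 < c) (hK : 0 < K) (hp : 0 < p) (hb : p * Fintype.card V ≤ b)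
    (hb' : b ≤ 2 * (p * Fintype.card V)) (hAc : c * Fintype.card V ≤ ∑ x, A x)
    (hsmall : ∑ y, greedyLink c (trimBound s c K) p b A I y < c / 4 * Fintype.card V) :
    Disjoint I (heavyVertices c (trimBound s c K) p A (greedyLink c (trimBound s c K) p b A I)) ∧
      c / (2 * K) * Fintype.card V ≤
        #(heavyVertices c (trimBound s c K) p A (greedyLink c (trimBound s c K) p b A I)) := by
  have hsteps : c / 4 * Fintype.card V ≤ b * (p⁻¹ * (c / 4)) := by
    calc c / 4 * Fintype.card V = p * Fintype.card V * (p⁻¹ * (c / 4)) := by field_simp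
      _ ≤ b * (p⁻¹ * (c / 4)) := by gcongr
  have hsum : ∑ y, greedyLink c (trimBound s c K) p b A I y ≤ 2 * K * Fintype.card V :=
    calc ∑ y, greedyLink c (trimBound s c K) p b A I y
        ≤ b * (p⁻¹ * K) := hA.sum_greedyLink_le hK.le hp
      _ ≤ 2 * (p * Fintype.card V) * (p⁻¹ * K) := by gcongr
      _ = 2 * K * Fintype.card V := by field_simp
  have hbounded := hA.greedyLink_apply (b := b) (I := I) (c := c) hK.le
    (le_max_left _ (2 ^ (s + 4) * K ^ 2 / c)) hp
  exact ⟨(le_sum_greedyLink_or_disjoint hp).resolve_left fun hle =>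
      (hsmall.trans_le (hsteps.trans hle)).false,
    hA.le_card_heavyVertices hbounded.nonneg hc hK hp hAc hsum⟩

/-- The container algorithm. The greedy algorithm runs for `b` steps; if the weight it produces is
large, that weight is used at uniformity one less, and otherwise the argument avoids all remaining
heavy vertices. -/
noncomputable def container (p : ℝ) (b : ℕ) :
    (s : ℕ) → (c K : ℝ) → ((Fin s → V) → ℝ) → FingerprintMap V (Finset V)
  | 0, _, _, _ => .pure univ
  | s + 1, c, K, A => (greedyLink c (trimBound s c K) p b A).bind fun h =>
      if c / 4 * Fintype.card V ≤ ∑ y, h y then container p b s (c / 4) (trimBound s c K) h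
      else .pure (heavyVertices c (trimBound s c K) p A h)ᶜ

/-- The proportion of the vertices that the container algorithm removes. -/
noncomputable def containerRate : ℕ → ℝ → ℝ → ℝ
  | 0, _, _ => 1
  | s + 1, c, K => min (containerRate s (c / 4) (trimBound s c K)) (c / (2 * K))

lemma containerRate_pos (s : ℕ) (hc : 0 < c) (hK : 0 < K) : 0 < containerRate s c K := by
  induction s generalizing c K with
  | zero => exact one_pos
  | succ s ih => exact lt_min (ih (by positivity) (trimBound_pos s c hK)) (by positivity)

lemma card_fingerprint_container_le (p : ℝ) (b s : ℕ) (c K : ℝ) (A : (Fin s → V) → ℝ)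
    (I : Finset V) : #((container p b s c K A).fingerprint I) ≤ s * b := by
  induction s generalizing c K with
  | zero => exact card_empty.le.trans (Nat.zero_le _)
  | succ s ih =>
    refine (card_fingerprint_bind_le card_fingerprint_greedyLink_le (b := s * b) ?_).trans_eq
      (by ring)
    split_ifs
    · exact ih _ _ _
    · exact card_empty.le.trans (Nat.zero_le _)

lemma container_succ_apply (p : ℝ) (b : ℕ) (c K : ℝ) (A : (Fin (s + 1) → V) → ℝ) (I : Finset V) :
    container p b (s + 1) c K A I =
      if c / 4 * Fintype.card V ≤ ∑ y, greedyLink c (trimBound s c K) p b A I y then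
        container p b s (c / 4) (trimBound s c K) (greedyLink c (trimBound s c K) p b A I) I
      else (heavyVertices c (trimBound s c K) p A (greedyLink c (trimBound s c K) p b A I))ᶜ := by
  change (if _ then _ else _ : FingerprintMap V (Finset V)) I = _
  split_ifs <;> rfl

theorem IsBoundedWeight.subset_container_and_le_card_sdiff {A : (Fin s → V) → ℝ}
    (hA : IsBoundedWeight K p W A) (hI : IsIndependent A I) (hc : 0 < c) (hK : 0 < K) (hp : 0 < p)
    (hb : p * Fintype.card V ≤ b) (hb' : b ≤ 2 * (p * Fintype.card V))
    (hAc : c * Fintype.card V ≤ ∑ x, A x) :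
    I ⊆ container p b s c K A I ∧
      containerRate s c K * Fintype.card V ≤ #(W \ container p b s c K A I) := by
  induction s generalizing c K with
  | zero =>
    have hsum : ∑ x, A x = 0 := sum_eq_zero fun x _ => hI x fun j => j.elim0
    have hn : (Fintype.card V : ℝ) ≤ 0 := nonpos_of_mul_nonpos_right (hAc.trans_eq hsum) hc
    refine ⟨subset_univ I, ?_⟩
    rw [containerRate, one_mul]
    exact hn.trans (Nat.cast_nonneg _)
  | succ s ih =>
    rw [container_succ_apply]
    set L := trimBound s c K
    set h := greedyLink c L p b A I
    by_cases hlarge : c / 4 * Fintype.card V ≤ ∑ y, h y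
    · rw [if_pos hlarge]
      obtain ⟨hsub, hcard⟩ :=
        ih (hA.greedyLink_apply hK.le (le_max_left _ _) hp) hI.greedyLink_apply (by positivity)
          (trimBound_pos s c hK) hlarge
      exact ⟨hsub, (mul_le_mul_of_nonneg_right (min_le_left _ _) (Nat.cast_nonneg _)).trans hcard⟩
    · obtain ⟨hdisj, hheavy⟩ :=
        hA.disjoint_and_le_card_heavyVertices (I := I) hc hK hp hb hb' hAc (not_le.1 hlarge)
      have hsdiff : W \ (heavyVertices c L p A h)ᶜ = heavyVertices c L p A h := by
        rw [sdiff_compl, inf_eq_right]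
        exact hA.heavyVertices_subset hc
      rw [if_neg hlarge, hsdiff]
      exact ⟨subset_compl_iff_disjoint_right.2 hdisj,
        (mul_le_mul_of_nonneg_right (min_le_right _ _) (Nat.cast_nonneg _)).trans hheavy⟩

end Container

section Hypergraph

open FingerprintMap

variable {k : ℕ} {V : Type*}

/-- The weight `1 / Δ` on the tuples of `H`, which scales the maximum degree `Δ` of `H` to `1`. -/
noncomputable def edgeWeight (Δ : ℝ) (H : Finset (Fin k → V)) (x : Fin k → V) : ℝ :=
  if x ∈ H then Δ⁻¹ else 0

variable [Fintype V] {H E : Finset (Fin k → V)} {Δ p : ℝ}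

lemma codegree_edgeWeight (Δ : ℝ) (H : Finset (Fin k → V)) (U : Finset (Fin k)) (g : Fin k → V) :
    codegree (edgeWeight Δ H) U g = #{x ∈ H | ∀ j ∈ U, x j = g j} * Δ⁻¹ := by
  simp only [codegree, edgeWeight]
  rw [sum_ite_mem, sum_const, nsmul_eq_mul]
  congr 3
  ext x
  simp only [mem_inter, mem_filter, mem_univ, true_and, and_comm]

lemma sum_edgeWeight (Δ : ℝ) (H : Finset (Fin k → V)) : ∑ x, edgeWeight Δ H x = #H * Δ⁻¹ := by
  simp only [edgeWeight]
  rw [sum_ite_mem, univ_inter, sum_const, nsmul_eq_mul]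

lemma isBoundedWeight_edgeWeight (hΔ : 0 < Δ) (hEH : E ⊆ H) {W : Finset V}
    (hEW : ∀ x ∈ E, ∀ j, x j ∈ W)
    (hdeg : ∀ U : Finset (Fin k), U.Nonempty → ∀ g : Fin k → V,
      #{x ∈ H | ∀ j ∈ U, x j = g j} ≤ p ^ (#U - 1) * Δ) :
    IsBoundedWeight 1 p W (edgeWeight Δ E) where
  nonneg x := by
    simp only [edgeWeight]
    split_ifs
    exacts [inv_nonneg.2 hΔ.le, le_rfl]
  mem_of_ne_zero {x} hx := hEW x (of_not_not fun hE => hx (if_neg hE))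
  codegree_le {U} hU g := by
    rw [codegree_edgeWeight, ← div_eq_mul_inv, one_mul, div_le_iff₀ hΔ]
    refine le_trans ?_ (hdeg U hU g)
    gcongr

variable {b m : ℕ} {c d : ℝ}

theorem exists_fingerprintMap_card_lt (hΔ : 0 < Δ) (hp : 0 < p) (hc : 0 < c) (hd : 0 < d)
    (hdeg : ∀ U : Finset (Fin k), U.Nonempty → ∀ g : Fin k → V,
      #{x ∈ H | ∀ j ∈ U, x j = g j} ≤ p ^ (#U - 1) * Δ)
    (hsat : ∀ W : Finset V, d ≤ #W → c * (Δ * Fintype.card V) ≤ #{x ∈ H | ∀ j, x j ∈ W})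
    (hb : p * Fintype.card V ≤ b) (hb' : b ≤ 2 * (p * Fintype.card V))
    (hm : 1 ≤ m * containerRate k c 1) :
    ∃ F : FingerprintMap V (Finset V), (∀ I, #(F.fingerprint I) ≤ m * (k * b)) ∧
      ∀ I, (∀ x ∈ H, ¬ ∀ j, x j ∈ I) → I ⊆ F I ∧ #(F I) < d := by
  let E (W : Finset V) : Finset (Fin k → V) := {x ∈ H | ∀ j, x j ∈ W}
  let cont (W : Finset V) := container p b k c 1 (edgeWeight Δ (E W))
  refine ⟨iterate (shrink d cont) m univ, card_fingerprint_iterate_le (card_fingerprint_shrink_le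
    fun W => card_fingerprint_container_le p b k c 1 _) m univ, fun I hI => ?_⟩
  refine subset_iterate_shrink_and_card_lt (r := containerRate k c 1 * Fintype.card V)
    (fun W hW => ?_) (subset_univ I) hd ?_
  · have hbounded : IsBoundedWeight 1 p W (edgeWeight Δ (E W)) :=
      isBoundedWeight_edgeWeight hΔ (filter_subset _ H) (fun x hx => (mem_filter.1 hx).2) hdeg
    have hindep : IsIndependent (edgeWeight Δ (E W)) I :=
      fun x hx => if_neg fun hE => hI x (mem_filter.1 hE).1 hx
    refine hbounded.subset_container_and_le_card_sdiff hindep hc one_pos hp hb hb' ?_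
    rw [sum_edgeWeight, ← div_eq_mul_inv, le_div_iff₀' hΔ, mul_left_comm]
    exact hsat W hW
  · rw [card_univ, ← mul_assoc]
    exact le_mul_of_one_le_left (Nat.cast_nonneg _) hm

end Hypergraph

section Binomial

variable {n N t j : ℕ} {δ : ℝ}

lemma choose_sub_mul_pow_le_pow_mul_choose (hjt : j ≤ t) (htN : t ≤ N) :
    N.choose (t - j) * (N + 1 - t) ^ j ≤ t ^ j * N.choose t := by
  have hsub : N + 1 - t = N - (t - j) + 1 - j := by lia
  calc N.choose (t - j) * (N + 1 - t) ^ j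
      ≤ N.choose (t - j) * (N - (t - j)).descFactorial j := by
        rw [hsub]
        exact Nat.mul_le_mul_left _ (Nat.pow_sub_le_descFactorial _ _)
    _ = t.descFactorial j * N.choose t := by
        have hmul := Nat.choose_mul (n := N) (Nat.sub_le t j)
        rw [Nat.choose_symm hjt, Nat.sub_sub_self hjt] at hmul
        rw [Nat.descFactorial_eq_factorial_mul_choose, Nat.descFactorial_eq_factorial_mul_choose]
        linear_combination -(j.factorial * hmul)
    _ ≤ t ^ j * N.choose t := Nat.mul_le_mul_right _ (Nat.descFactorial_le_pow t j)

lemma choose_sub_le (hδ : 0 < δ) (hn : 0 < n) (hjt : j ≤ t) (ht : t ≤ δ * n / 2) :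
    (⌊δ * n⌋₊.choose (t - j) : ℝ) ≤ t ^ j * ⌊δ * n⌋₊.choose t / (δ * n / 2) ^ j := by
  set N := ⌊δ * n⌋₊
  have hδn : 0 < δ * n := by positivity
  have htN : t ≤ N := Nat.le_floor (by linarith)
  have hN : δ * n / 2 ≤ (N + 1 - t : ℕ) := by
    rw [Nat.cast_sub (htN.trans N.le_succ)]
    push_cast
    linarith [Nat.lt_floor_add_one (δ * n)]
  rw [le_div_iff₀ (by positivity)]
  calc (N.choose (t - j) : ℝ) * (δ * n / 2) ^ j
      ≤ N.choose (t - j) * (N + 1 - t : ℕ) ^ j := by gcongr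
    _ ≤ t ^ j * N.choose t := by exact_mod_cast choose_sub_mul_pow_le_pow_mul_choose hjt htN

lemma choose_mul_choose_sub_le (hδ0 : 0 < δ) (hδ1 : δ ≤ 1) (hn : 0 < n) (ht : t ≤ δ * n / 2)
    (hj : j ≤ δ * t) : (n.choose j : ℝ) * ⌊δ * n⌋₊.choose (t - j) ≤
      (2 * Real.exp 1 / δ ^ 2) ^ (δ * t) * ⌊δ * n⌋₊.choose t := by
  have hjt : j ≤ t := by exact_mod_cast hj.trans (mul_le_of_le_one_left (Nat.cast_nonneg t) hδ1)
  have hbase : 1 ≤ 2 / δ ^ 2 := by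
    rw [le_div_iff₀ (by positivity)]
    linarith [pow_le_one₀ hδ0.le hδ1 (n := 2)]
  have hpow : (2 / δ ^ 2) ^ j ≤ (2 / δ ^ 2) ^ (δ * t) := by
    rw [← Real.rpow_natCast]
    exact Real.rpow_le_rpow_of_exponent_le hbase hj
  have hexp : (δ * t) ^ j / j.factorial ≤ Real.exp (δ * t) :=
    Real.pow_div_factorial_le_exp _ (by positivity) j
  calc (n.choose j : ℝ) * ⌊δ * n⌋₊.choose (t - j)
      ≤ n ^ j / j.factorial * (t ^ j * ⌊δ * n⌋₊.choose t / (δ * n / 2) ^ j) :=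
        mul_le_mul (Nat.choose_le_pow_div j n) (choose_sub_le hδ0 hn hjt ht)
          (Nat.cast_nonneg _) (by positivity)
    _ = (2 / δ ^ 2) ^ j * ((δ * t) ^ j / j.factorial) * ⌊δ * n⌋₊.choose t := by
        simp only [div_pow, mul_pow]
        field_simp
        ring
    _ ≤ (2 / δ ^ 2) ^ (δ * t) * Real.exp (δ * t) * ⌊δ * n⌋₊.choose t := by gcongr
    _ = (2 * Real.exp 1 / δ ^ 2) ^ (δ * t) * ⌊δ * n⌋₊.choose t := by
        rw [mul_div_right_comm, Real.mul_rpow (by positivity) (by positivity), Real.exp_one_rpow]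

lemma sum_choose_mul_choose_sub_le {b : ℕ} (hδ0 : 0 < δ) (hδ1 : δ < 1) (ht0 : 0 < t)
    (ht : t ≤ δ * n / 2) (hb : b ≤ δ * t) :
    ((∑ j ∈ range (b + 1), n.choose j * ⌊δ * n⌋₊.choose (t - j) : ℕ) : ℝ) ≤
      t * (2 * Real.exp 1 / δ ^ 2) ^ (δ * t) * ⌊δ * n⌋₊.choose t := by
  have ht0' : (0 : ℝ) < t := Nat.cast_pos.2 ht0
  have hn : 0 < n := Nat.pos_of_ne_zero fun h0 => by
    rw [h0, Nat.cast_zero, mul_zero, zero_div] at ht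
    linarith
  have hbt : b < t := by exact_mod_cast hb.trans_lt (mul_lt_of_lt_one_left ht0' hδ1)
  push_cast
  calc ∑ j ∈ range (b + 1), (n.choose j : ℝ) * ⌊δ * n⌋₊.choose (t - j)
      ≤ #(range (b + 1)) • ((2 * Real.exp 1 / δ ^ 2) ^ (δ * t) * ⌊δ * n⌋₊.choose t : ℝ) := by
        refine sum_le_card_nsmul _ _ _ fun j hj => choose_mul_choose_sub_le hδ0 hδ1.le hn ht ?_
        exact (Nat.cast_le.2 (mem_range_succ_iff.1 hj)).trans hb
    _ ≤ t * (2 * Real.exp 1 / δ ^ 2) ^ (δ * t) * ⌊δ * n⌋₊.choose t := by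
        rw [card_range, nsmul_eq_mul, mul_assoc]
        gcongr
        exact hbt

end Binomial

section DegreesOfFreedom

variable {k ℓ : ℕ} {G : Type} {S : Finset (Fin k → G)}

lemma le_card_filter_distinctPart {c : ℝ} {X : Finset G} (hc : 0 ≤ c)
    (hS : (1 - c / 2) * #S ≤ #(distinctPart S)) (hX : c * #S ≤ #{x ∈ S | ∀ j, x j ∈ X}) :
    c / 2 * #(distinctPart S) ≤ #{x ∈ distinctPart S | ∀ j, x j ∈ X} := by
  have hsub : distinctPart S ⊆ S := filter_subset _ S
  have hsplit : (#{x ∈ S | ∀ j, x j ∈ X} : ℝ) ≤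
      #{x ∈ distinctPart S | ∀ j, x j ∈ X} + #(S \ distinctPart S) := by
    rw [← Nat.cast_add, ← sdiff_union_of_subset hsub, filter_union, add_comm]
    refine Nat.cast_le.2 ((card_union_le _ _).trans ?_)
    rw [sdiff_union_of_subset hsub]
    gcongr
    exact filter_subset _ _
  have hsdiff : (#(S \ distinctPart S) : ℝ) = #S - #(distinctPart S) := cast_card_sdiff hsub
  have hcard : c / 2 * #(distinctPart S) ≤ c / 2 * #S := by gcongr
  linarith

lemma card_filter_apply_eq_le [AddGroup G] (hS : ∀ x ∈ S, ∀ a, (fun j => x j + a) ∈ S) (j : Fin k)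
    (u v : G) : #{x ∈ distinctPart S | x j = u} ≤ #{x ∈ distinctPart S | x j = v} := by
  refine card_le_card_of_injOn (fun x i => x i + (-u + v)) (fun x hx => ?_) fun x _ y _ hxy =>
    funext fun i => add_right_cancel (congrFun hxy i)
  obtain ⟨hxS, rfl⟩ := mem_filter.1 hx
  obtain ⟨hxS, hxinj⟩ := mem_filter.1 hxS
  exact mem_filter.2 ⟨mem_filter.2 ⟨hS x hxS _, (add_left_injective _).comp hxinj⟩,
    add_neg_cancel_left _ _⟩

variable [Fintype G]

lemma card_filter_le_alphaR (S : Finset (Fin k → G)) (U : Finset (Fin k)) (g : Fin k → G) :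
    #{x ∈ distinctPart S | ∀ j ∈ U, x j = g j} ≤ alphaR S #U := by
  unfold alphaR
  refine le_trans ?_ (le_sup ((mem_filter_univ U).2 rfl))
  exact le_sup (f := fun g => #{x ∈ distinctPart S | ∀ j ∈ U, x j = g j}) (mem_univ g)

lemma alphaR_pos (hS : (distinctPart S).Nonempty) (hℓ : ℓ ≤ k) : 0 < alphaR S ℓ := by
  obtain ⟨x, hx⟩ := hS
  obtain ⟨U, -, rfl⟩ := exists_subset_card_eq (s := (univ : Finset (Fin k))) (by simpa using hℓ)
  exact (card_pos.2 ⟨x, mem_filter.2 ⟨hx, fun _ _ => rfl⟩⟩).trans_le (card_filter_le_alphaR S U x)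

lemma card_filter_forall_mem_eq_le (S : Finset (Fin k → G)) (U : Finset (Fin k)) (g : Fin k → G) :
    #{x ∈ S | ∀ j ∈ U, x j = g j} ≤ Fintype.card G ^ (k - #U) := by
  have hinj : Set.InjOn (fun (x : Fin k → G) (j : (Uᶜ : Finset (Fin k))) => x j)
      ({x ∈ S | ∀ j ∈ U, x j = g j} : Finset (Fin k → G)) := by
    intro x hx y hy hxy
    funext j
    by_cases hj : j ∈ U
    · rw [(mem_filter.1 hx).2 j hj, (mem_filter.1 hy).2 j hj]
    · exact congrFun hxy ⟨j, mem_compl.2 hj⟩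
  refine (card_le_card_of_injOn _ (fun _ _ => mem_univ _) hinj).trans_eq ?_
  rw [card_univ, Fintype.card_fun, Fintype.card_coe, card_compl, Fintype.card_fin]

lemma alphaR_le_card_pow (S : Finset (Fin k → G)) (ℓ : ℕ) :
    alphaR S ℓ ≤ Fintype.card G ^ (k - ℓ) := by
  refine Finset.sup_le fun U hU => Finset.sup_le fun g _ => ?_
  rw [← (mem_filter_univ U).1 hU]
  exact card_filter_forall_mem_eq_le _ U g

lemma alphaR_one_mul_card_le [AddGroup G] (hS : ∀ x ∈ S, ∀ a, (fun j => x j + a) ∈ S) :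
    alphaR S 1 * Fintype.card G ≤ #(distinctPart S) := by
  rw [← Nat.le_div_iff_mul_le Fintype.card_pos]
  refine Finset.sup_le fun U hU => Finset.sup_le fun g _ => ?_
  obtain ⟨j, rfl⟩ := card_eq_one.1 ((mem_filter_univ U).1 hU)
  simp only [mem_singleton, forall_eq]
  rw [Nat.le_div_iff_mul_le Fintype.card_pos, mul_comm, ← smul_eq_mul, ← card_univ,
    card_eq_sum_card_fiberwise (s := distinctPart S) (f := fun x => x j) (t := univ)
      fun _ _ => mem_univ _]
  exact card_nsmul_le_sum _ _ _ fun a _ => card_filter_apply_eq_le hS j (g j) a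

/-- The maximum over `2 ≤ ℓ ≤ k` of `((α_ℓ / α_1) (1 / k) C(k, ℓ)) ^ (1 / (ℓ - 1))`: up to the
factor `k`, the least density `p` for which `α_ℓ ≤ p ^ (ℓ - 1) α_1`. -/
noncomputable def degreeParameter (S : Finset (Fin k → G)) : ℝ :=
  sSup {x : ℝ | ∃ ℓ : ℕ, 2 ≤ ℓ ∧ ℓ ≤ k ∧
    x = ((alphaR S ℓ : ℝ) / (alphaR S 1 : ℝ) * (1 / (k : ℝ)) *
      (Nat.choose k ℓ : ℝ)) ^ (1 / ((ℓ : ℝ) - 1))}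

lemma le_degreeParameter (S : Finset (Fin k → G)) (hℓ : 2 ≤ ℓ) (hℓk : ℓ ≤ k) :
    ((alphaR S ℓ : ℝ) / alphaR S 1 * (1 / k) * k.choose ℓ) ^ (1 / ((ℓ : ℝ) - 1)) ≤
      degreeParameter S := by
  refine le_csSup (((Set.finite_Iic k).image fun ℓ : ℕ =>
    ((alphaR S ℓ : ℝ) / alphaR S 1 * (1 / k) * k.choose ℓ) ^ (1 / ((ℓ : ℝ) - 1))).subset ?_
      |>.bddAbove) ⟨ℓ, hℓ, hℓk, rfl⟩
  rintro _ ⟨ℓ, -, hℓk, rfl⟩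
  exact ⟨ℓ, hℓk, rfl⟩

lemma degreeParameter_nonneg (S : Finset (Fin k → G)) : 0 ≤ degreeParameter S := by
  refine Real.sSup_nonneg ?_
  rintro _ ⟨ℓ, -, -, rfl⟩
  positivity

lemma alphaR_le_pow_mul_alphaR_one (hS : (distinctPart S).Nonempty) (hℓ : 2 ≤ ℓ) (hℓk : ℓ ≤ k) :
    (alphaR S ℓ : ℝ) ≤ (k * degreeParameter S) ^ (ℓ - 1) * alphaR S 1 := by
  have hα : (0 : ℝ) < alphaR S 1 := Nat.cast_pos.2 (alphaR_pos hS (by lia))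
  have hk : (1 : ℝ) ≤ k := Nat.one_le_cast.2 (by lia)
  have hchoose : (1 : ℝ) ≤ k.choose ℓ := Nat.one_le_cast.2 (Nat.choose_pos hℓk)
  have hroot := le_degreeParameter S hℓ hℓk
  rw [← Nat.cast_pred (by lia), one_div ((ℓ - 1 : ℕ) : ℝ),
    Real.rpow_inv_le_iff_of_pos (by positivity) (degreeParameter_nonneg S)
      (Nat.cast_pos.2 (by lia)), Real.rpow_natCast] at hroot
  calc (alphaR S ℓ : ℝ)
      ≤ alphaR S ℓ * k.choose ℓ := le_mul_of_one_le_right (Nat.cast_nonneg _) hchoose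
    _ = k * (alphaR S ℓ / alphaR S 1 * (1 / k) * k.choose ℓ) * alphaR S 1 := by field_simp
    _ ≤ k ^ (ℓ - 1) * degreeParameter S ^ (ℓ - 1) * alphaR S 1 := by
        gcongr
        exact le_self_pow₀ hk (by lia)
    _ = (k * degreeParameter S) ^ (ℓ - 1) * alphaR S 1 := by rw [mul_pow]

lemma one_le_mul_degreeParameter_mul_card (hk : 2 ≤ k) (hS : (distinctPart S).Nonempty) :
    1 ≤ k * degreeParameter S * Fintype.card G := by
  have hnonneg : 0 ≤ k * degreeParameter S :=
    mul_nonneg (Nat.cast_nonneg k) (degreeParameter_nonneg S)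
  rw [← one_le_pow_iff_of_nonneg (by positivity) (Nat.sub_ne_zero_of_lt hk)]
  calc (1 : ℝ)
      ≤ alphaR S k := Nat.one_le_cast.2 (alphaR_pos hS le_rfl)
    _ ≤ (k * degreeParameter S) ^ (k - 1) * alphaR S 1 := alphaR_le_pow_mul_alphaR_one hS hk le_rfl
    _ ≤ (k * degreeParameter S) ^ (k - 1) * Fintype.card G ^ (k - 1) := by
        gcongr
        exact_mod_cast alphaR_le_card_pow S 1
    _ = (k * degreeParameter S * Fintype.card G) ^ (k - 1) := (mul_pow _ _ _).symm

lemma card_filter_distinctPart_le_pow_mul (hS : (distinctPart S).Nonempty) {U : Finset (Fin k)}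
    (hU : U.Nonempty) (g : Fin k → G) :
    (#{x ∈ distinctPart S | ∀ j ∈ U, x j = g j} : ℝ) ≤
      (k * degreeParameter S) ^ (#U - 1) * alphaR S 1 := by
  refine (Nat.cast_le.2 (card_filter_le_alphaR S U g)).trans ?_
  obtain hU1 | hU2 : #U = 1 ∨ 2 ≤ #U := by have := hU.card_pos; lia
  · rw [hU1, Nat.sub_self, pow_zero, one_mul]
  · exact alphaR_le_pow_mul_alphaR_one hS hU2 (card_finset_fin_le U)

end DegreesOfFreedom

section Counting

variable {k : ℕ} {δ c : ℝ}

theorem exists_card_filter_independent_le (hk : 2 ≤ k) (hδ0 : 0 < δ) (hδ1 : δ < 1) (hc : 0 < c) :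
    ∃ C : ℝ, 0 < C ∧ ∀ (G : Type) [Fintype G] (S : Finset (Fin k → G)),
      (distinctPart S).Nonempty →
      (∀ X : Finset G, δ * Fintype.card G ≤ #X →
        c * (alphaR S 1 * Fintype.card G) ≤ #{x ∈ distinctPart S | ∀ j, x j ∈ X}) →
      ∀ t : ℕ, C * (Fintype.card G / δ) * degreeParameter S ≤ t → t ≤ δ * Fintype.card G / 2 →
        (#{X : Finset G | #X = t ∧ ∀ x ∈ distinctPart S, ¬ ∀ j, x j ∈ X} : ℝ) ≤
          t * (2 * Real.exp 1 / δ ^ 2) ^ (δ * t) * (⌊δ * Fintype.card G⌋₊.choose t) := by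
  have hrate : 0 < containerRate k c 1 := containerRate_pos k hc one_pos
  obtain ⟨m, hm⟩ := exists_nat_gt (1 / containerRate k c 1)
  have hm0 : (0 : ℝ) < m := (one_div_pos.2 hrate).trans hm
  have hk0 : (0 : ℝ) < k := Nat.cast_pos.2 (by lia)
  refine ⟨2 * m * k ^ 2, by positivity, fun G _ S hS hsat t hlow hup => ?_⟩
  set n : ℝ := (Fintype.card G : ℝ)
  set p : ℝ := k * degreeParameter S
  have hpn : 1 ≤ p * n := one_le_mul_degreeParameter_mul_card hk hS
  have hp : 0 < p := pos_of_mul_pos_left (one_pos.trans_le hpn) (Nat.cast_nonneg _)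
  have hn : 0 < n := pos_of_mul_pos_right (one_pos.trans_le hpn) hp.le
  have hb' : (⌈p * n⌉₊ : ℝ) ≤ 2 * (p * n) := by
    linarith [Nat.ceil_lt_add_one (zero_le_one.trans hpn)]
  obtain ⟨F, hF, hFI⟩ := exists_fingerprintMap_card_lt
    (Nat.cast_pos.2 (alphaR_pos hS (by lia))) hp hc (mul_pos hδ0 hn)
    (fun U hU => card_filter_distinctPart_le_pow_mul hS hU) hsat (Nat.le_ceil _) hb'
    ((div_le_iff₀ hrate).1 hm.le)
  have hfingerprint : ((m * (k * ⌈p * n⌉₊) : ℕ) : ℝ) ≤ δ * t := by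
    push_cast
    calc (m : ℝ) * (k * ⌈p * n⌉₊) ≤ m * (k * (2 * (p * n))) := by gcongr
      _ = δ * (2 * m * k ^ 2 * (n / δ) * degreeParameter S) := by
          simp only [p]
          field_simp
      _ ≤ δ * t := by gcongr
  have ht0 : 0 < t := by
    have : 0 < 2 * m * k ^ 2 * (n / δ) * degreeParameter S :=
      mul_pos (by positivity) (pos_of_mul_pos_right hp hk0.le)
    exact_mod_cast this.trans_le hlow
  have hcount := F.card_le_sum_choose_mul_choose (t := t) hF fun I hI =>
    ⟨(hFI I hI).1, Nat.le_floor (hFI I hI).2.le⟩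
  exact (Nat.cast_le.2 hcount).trans
    (sum_choose_mul_choose_sub_le hδ0 hδ1 ht0 hup hfingerprint)

theorem stmt5_general {β : ℝ} (hk : 2 ≤ k) (hδ0 : 0 < δ) (hδ1 : δ < 1) (hβ : 0 < β) (hc : 0 < c)
    {G : ℕ → Type} [∀ i, Fintype (G i)] {S : ∀ i, Finset (Fin k → G i)}
    (hdeg : ∀ i, β * (alphaR (S i) 1 * Fintype.card (G i)) ≤ #(distinctPart (S i)))
    (hdistinct : Tendsto (fun i => (#(distinctPart (S i)) : ℝ) / #(S i)) atTop (𝓝 1))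
    (hsat : ∀ i, ∀ X : Finset (G i), δ * Fintype.card (G i) ≤ #X →
      c * #(S i) ≤ #{x ∈ S i | ∀ j, x j ∈ X}) :
    ∃ (n₀ : ℕ) (C : ℝ), 0 < C ∧ ∀ i, n₀ < Fintype.card (G i) → ∀ t : ℕ,
      C * (Fintype.card (G i) / δ) * degreeParameter (S i) ≤ t → t ≤ δ * Fintype.card (G i) / 2 →
        (#{X : Finset (G i) | #X = t ∧ ∀ x ∈ distinctPart (S i), ¬ ∀ j, x j ∈ X} : ℝ) ≤
          t * (2 * Real.exp 1 / δ ^ 2) ^ (δ * t) * (⌊δ * Fintype.card (G i)⌋₊.choose t) := by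
  obtain ⟨C, hC, hcount⟩ := exists_card_filter_independent_le hk hδ0 hδ1 (c := c / 2 * β)
    (by positivity)
  have hlim : max 0 (1 - c / 2) < 1 := max_lt one_pos (by linarith)
  obtain ⟨N, hN⟩ := eventually_atTop.1 (hdistinct.eventually_const_lt hlim)
  refine ⟨(range N).sup fun i => Fintype.card (G i), C, hC, fun i hi t => ?_⟩
  have hNi : N ≤ i := not_lt.1 fun hlt =>
    hi.not_ge (le_sup (f := fun i => Fintype.card (G i)) (mem_range.2 hlt))
  obtain ⟨hpos, hratio⟩ := max_lt_iff.1 (hN i hNi)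
  obtain ⟨hdistinct0, hS0⟩ := div_ne_zero_iff.1 hpos.ne'
  have hne : (distinctPart (S i)).Nonempty := card_ne_zero.1 (Nat.cast_ne_zero.1 hdistinct0)
  have hS : (0 : ℝ) < #(S i) := (Nat.cast_nonneg _).lt_of_ne' hS0
  refine hcount (G i) (S i) hne (fun X hX => ?_) t
  rw [mul_assoc]
  calc c / 2 * (β * (alphaR (S i) 1 * Fintype.card (G i)))
      ≤ c / 2 * #(distinctPart (S i)) := by gcongr; exact hdeg i
    _ ≤ #{x ∈ distinctPart (S i) | ∀ j, x j ∈ X} :=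
        le_card_filter_distinctPart hc.le ((lt_div_iff₀ hS).1 hratio).le (hsat i X hX)

end Counting

/-- counting solution-free sets for normal sequences arising from invariant
homomorphisms of finite abelian groups. -/
theorem stmt5 (k : ℕ) (hk : 2 ≤ k) (δ : ℝ) (hδ0 : 0 < δ) (hδ1 : δ < 1)
    (G : ℕ → Type) [∀ i, Fintype (G i)] [∀ i, AddCommGroup (G i)]
    (S : ∀ i, Finset (Fin k → G i))
    (M : ∀ i, (Fin k → G i) →+ (Fin k → G i))
    (hinv : ∀ i (x : G i), M i (fun _ => x) = 0)
    (hker : ∀ i (x : Fin k → G i), x ∈ S i ↔ M i x = 0)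
    (γ : ℝ → ℝ) (hnormal : NormalSeq k G S γ) :
    ∃ (n₀ : ℕ) (C : ℝ), 0 < C ∧
      ∀ i, n₀ < Fintype.card (G i) → ∀ t : ℕ,
        C * ((Fintype.card (G i) : ℝ) / δ) *
          sSup {x : ℝ | ∃ ℓ : ℕ, 2 ≤ ℓ ∧ ℓ ≤ k ∧
            x = ((alphaR (S i) ℓ : ℝ) / (alphaR (S i) 1 : ℝ) * (1/(k:ℝ)) *
                  (Nat.choose k ℓ : ℝ)) ^ (1 / ((ℓ:ℝ) - 1))} ≤ (t : ℝ) →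
        (t : ℝ) ≤ δ * (Fintype.card (G i) : ℝ) / 2 →
        ((Finset.univ.filter (fun X : Finset (G i) =>
            X.card = t ∧ ∀ x ∈ distinctPart (S i), ¬ (∀ j, x j ∈ X))).card : ℝ)
          ≤ (t : ℝ) * (2 * Real.exp 1 / δ^2) ^ (δ * (t:ℝ)) *
              (Nat.choose ⌊δ * (Fintype.card (G i) : ℝ)⌋₊ t : ℝ) := by
  obtain ⟨-, -, -, hdistinct, hγ, hsat⟩ := hnormal
  have htranslate (i) : ∀ x ∈ S i, ∀ a, (fun j => x j + a) ∈ S i := fun x hx a => by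
    rw [hker]
    change M i (x + fun _ => a) = 0
    rw [map_add, (hker i x).1 hx, hinv, add_zero]
  exact stmt5_general hk hδ0 hδ1 one_pos (hγ δ hδ0 hδ1).1
    (fun i => by exact_mod_cast (one_mul _).trans_le (alphaR_one_mul_card_le (htranslate i)))
    hdistinct (hsat δ hδ0 hδ1)
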